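/- Let U : ℂ \ {0} → ℝ and let ψ = (ψ₁, ψ₂) satisfy the Dirac equation 𝒟ψ = 0 on ℂ \ {0} with potential U. For z′ ∈ ℂ define ψ̂₁(z′) = e^{z′/2}·ψ₁(e^{z′}), ψ̂₂(z′) = e^{conj(z′)/2}·ψ₂(e^{z′}), and Û(z′) = e^{Re z′}·U(e^{z′}). Then ψ̂ = (ψ̂₁, ψ̂₂) satisfies the Dirac equation in the variable z′ with potential Û: ∂_{z′} ψ̂₂ + Û ψ̂₁ = 0 and ∂̄_{z′} ψ̂₁ = Û ψ̂₂ on ℂ. -/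

import Mathlib

open Complex

/-- The Wirtinger derivative ∂f = (1/2)(∂f/∂x − i ∂f/∂y). -/
noncomputable def wd (f : ℂ → ℂ) (z : ℂ) : ℂ :=
  (1 / 2) * (fderiv ℝ f z 1 - Complex.I * fderiv ℝ f z Complex.I)

/-- The Wirtinger derivative ∂̄f = (1/2)(∂f/∂x + i ∂f/∂y). -/
noncomputable def wdbar (f : ℂ → ℂ) (z : ℂ) : ℂ :=
  (1 / 2) * (fderiv ℝ f z 1 + Complex.I * fderiv ℝ f z Complex.I)

/-- ψ = (ψ₁, ψ₂) satisfies the Dirac equation 𝒟ψ = 0 with potential U on Ω. -/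
def DiracEq (Ω : Set ℂ) (U : ℂ → ℝ) (ψ₁ ψ₂ : ℂ → ℂ) : Prop :=
  ∀ z ∈ Ω, wd ψ₂ z + (U z : ℂ) * ψ₁ z = 0 ∧ wdbar ψ₁ z = (U z : ℂ) * ψ₂ z

lemma real_lin_apply (L : ℂ →L[ℝ] ℂ) (w : ℂ) : L w = w.re * L 1 + w.im * L Complex.I := by
  have h : w = w.re • (1 : ℂ) + w.im • Complex.I := by
    simp [Complex.re_add_im]
  conv_lhs => rw [h]
  rw [map_add, map_smul, map_smul]
  simp

lemma hasFDeriv_aux (ψ : ℂ → ℂ) (A : ℂ → ℂ) (A' : ℂ →L[ℝ] ℂ) (z : ℂ)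
    (hA : HasFDerivAt A A' z) (h : DifferentiableOn ℝ ψ {z : ℂ | z ≠ 0}) (v : ℂ) :
    fderiv ℝ (fun z' => A z' * ψ (cexp z')) z v
      = A z * fderiv ℝ ψ (cexp z) (cexp z * v) + ψ (cexp z) * A' v := by
  have hd : DifferentiableAt ℝ ψ (cexp z) :=
    (h _ (Complex.exp_ne_zero z)).differentiableAt (isOpen_ne.mem_nhds (Complex.exp_ne_zero z))
  have he : HasFDerivAt cexp _ z :=
    (Complex.hasDerivAt_exp z).hasFDerivAt.restrictScalars ℝ
  have hc := hA.mul (hd.hasFDerivAt.comp z he)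
  have := hc.fderiv
  have e : (fun z' => A z' * ψ (cexp z')) = A * (ψ ∘ cexp) := rfl
  rw [e, this]
  simp [mul_comm]

theorem stmt_8 (U : ℂ → ℝ) (ψ₁ ψ₂ : ℂ → ℂ)
    (h₁ : DifferentiableOn ℝ ψ₁ {z : ℂ | z ≠ 0})
    (h₂ : DifferentiableOn ℝ ψ₂ {z : ℂ | z ≠ 0})
    (hψ : DiracEq {z : ℂ | z ≠ 0} U ψ₁ ψ₂) :
    DiracEq Set.univ
      (fun z' => Real.exp z'.re * U (Complex.exp z'))
      (fun z' => Complex.exp (z' / 2) * ψ₁ (Complex.exp z'))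
      (fun z' => Complex.exp (starRingEnd ℂ z' / 2) * ψ₂ (Complex.exp z')) := by
  intro z _
  obtain ⟨e₁, e₂⟩ := hψ (cexp z) (Complex.exp_ne_zero z)
  have hA : HasFDerivAt (fun z' : ℂ => cexp (z' / 2)) _ z :=
    (((hasDerivAt_id z).div_const 2).cexp).hasFDerivAt.restrictScalars ℝ
  have hB : HasFDerivAt (fun z' : ℂ => cexp (starRingEnd ℂ z' / 2)) _ z :=
    ((((hasDerivAt_id (starRingEnd ℂ z)).div_const 2).cexp).hasFDerivAt.restrictScalars ℝ).comp z
      Complex.conjCLE.toContinuousLinearMap.hasFDerivAt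
  have k : ((Real.exp z.re : ℝ) : ℂ) = cexp (z / 2) * cexp (starRingEnd ℂ z / 2) := by
    rw [← Complex.exp_add, Complex.ofReal_exp, Complex.re_eq_add_conj]
    congr 1
    ring
  have k1 : cexp z = cexp (z / 2) * cexp (z / 2) := by
    rw [← Complex.exp_add]; congr 1; ring
  have k2 : starRingEnd ℂ (cexp z)
      = cexp (starRingEnd ℂ z / 2) * cexp (starRingEnd ℂ z / 2) := by
    rw [← Complex.exp_add, ← Complex.exp_conj]; congr 1; ring
  have r1 : ((cexp z).re : ℂ) + (cexp z).im * Complex.I = cexp z :=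
    Complex.re_add_im _
  have r2 : ((cexp z).re : ℂ) - (cexp z).im * Complex.I
      = starRingEnd ℂ (cexp z) := by
    apply Complex.ext <;> simp
  have s1 := r1.trans k1
  have s2 := r2.trans k2
  rw [Complex.ofReal_exp] at k
  have I2 := Complex.I_mul_I
  unfold wd at e₁
  unfold wdbar at e₂
  constructor
  · unfold wd
    rw [hasFDeriv_aux ψ₂ _ _ z hB h₂, hasFDeriv_aux ψ₂ _ _ z hB h₂,
      real_lin_apply _ (cexp z * 1), real_lin_apply _ (cexp z * Complex.I)]


    simp
    generalize fderiv ℝ ψ₂ (cexp z) 1 = a at *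
    generalize fderiv ℝ ψ₂ (cexp z) Complex.I = b at *
    linear_combination (U (cexp z) * ψ₁ (cexp z) * cexp (z / 2)) * k + (cexp (starRingEnd ℂ z / 2) * cexp (z / 2) * cexp (z / 2)) * e₁
      + (cexp (starRingEnd ℂ z / 2) / 2 * (a - I * b)) * s1
      + (cexp (starRingEnd ℂ z / 2) * (cexp z).im * b / 2 + ψ₂ (cexp z) * cexp (starRingEnd ℂ z / 2) / 4) * I2
  · unfold wdbar
    rw [hasFDeriv_aux ψ₁ _ _ z hA h₁, hasFDeriv_aux ψ₁ _ _ z hA h₁,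
      real_lin_apply _ (cexp z * 1), real_lin_apply _ (cexp z * Complex.I)]
    simp
    generalize fderiv ℝ ψ₁ (cexp z) 1 = a at *
    generalize fderiv ℝ ψ₁ (cexp z) Complex.I = b at *
    linear_combination (-(U (cexp z) * ψ₂ (cexp z) * cexp (starRingEnd ℂ z / 2))) * k + (cexp (z / 2) * cexp (starRingEnd ℂ z / 2) * cexp (starRingEnd ℂ z / 2)) * e₂
      + (cexp (z / 2) / 2 * (a + I * b)) * s2
      + (cexp (z / 2) * (cexp z).im * b / 2 + ψ₁ (cexp z) * cexp (z / 2) / 4) * I2
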